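/- For fixed n and ℓ with 0 ≤ ℓ ≤ n, the expected dfsScore of a uniformly random node at level ℓ among all ordered trees with n edges equals (ℓ/(2ℓ+1)) * (n+ℓ+1). -/

import Mathlib

open scoped Classical

/-- Height (number of up-steps minus number of down-steps) after the first `k` steps
of the word `w`, where `true` encodes an up-step and `false` a down-step. -/
def heightAt (n : ℕ) (w : Fin n → Bool) (k : ℕ) : ℤ :=
  ((Finset.univ.filter (fun i : Fin n => (i : ℕ) < k ∧ w i = true)).card : ℤ) -
  ((Finset.univ.filter (fun i : Fin n => (i : ℕ) < k ∧ w i = false)).card : ℤ)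

/-- `w` is a Dyck word of semilength `n` (the standard encoding of an ordered tree
with `n` edges via its pre-order traversal: `true` = step away from the root). -/
def IsDyck (n : ℕ) (w : Fin (2 * n) → Bool) : Prop :=
  (Finset.univ.filter (fun i : Fin (2 * n) => w i = true)).card = n ∧
  ∀ k : ℕ, k ≤ 2 * n → 0 ≤ heightAt (2 * n) w k

/-- The ordered trees with `n` edges, encoded as Dyck words. -/
noncomputable def dyckWords (n : ℕ) : Finset (Fin (2 * n) → Bool) :=
  Finset.univ.filter (fun w => IsDyck n w)

/-- The nodes of the tree encoded by `w` : `none` is the root and `some i` for an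
up-step `i` (`w i = true`) is the node this step leads to. -/
def isNode (n : ℕ) (w : Fin (2 * n) → Bool) : Option (Fin (2 * n)) → Prop
  | none => True
  | some i => w i = true

/-- The level (distance to the root) of a node. -/
def nodeLevel (n : ℕ) (w : Fin (2 * n) → Bool) : Option (Fin (2 * n)) → ℤ
  | none => 0
  | some i => heightAt (2 * n) w ((i : ℕ) + 1)

/-- The set of nodes at level `ℓ` of the tree encoded by `w`. -/
noncomputable def nodesAtLevel (n : ℕ) (w : Fin (2 * n) → Bool) (ℓ : ℕ) :
    Finset (Option (Fin (2 * n))) :=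
  Finset.univ.filter (fun v => isNode n w v ∧ nodeLevel n w v = (ℓ : ℤ))

/-- The number of nodes visited before the given node in the depth-first (pre-order)
traversal: the root comes first, and the non-root nodes appear in the order of their
up-steps in the Dyck word. -/
noncomputable def dfsScore (n : ℕ) (w : Fin (2 * n) → Bool) : Option (Fin (2 * n)) → ℕ
  | none => 0
  | some i => 1 +
      (Finset.univ.filter (fun j : Fin (2 * n) => (j : ℕ) < (i : ℕ) ∧ w j = true)).card

/-- The number of nodes visited before the given node in breadth-first search:
nodes are visited level by level, and from left to right within a level. -/
noncomputable def bfsScore (n : ℕ) (w : Fin (2 * n) → Bool) : Option (Fin (2 * n)) → ℕ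
  | none => 0
  | some i => 1 +
      (Finset.univ.filter (fun j : Fin (2 * n) =>
        w j = true ∧ (nodeLevel n w (some j) < nodeLevel n w (some i) ∨
          (nodeLevel n w (some j) = nodeLevel n w (some i) ∧ (j : ℕ) < (i : ℕ))))).card

/-- Sum of the dfs scores of all nodes at level `ℓ` over all ordered trees with `n` edges. -/
noncomputable def totalD (n ℓ : ℕ) : ℕ :=
  ∑ w ∈ dyckWords n, ∑ v ∈ nodesAtLevel n w ℓ, dfsScore n w v

/-- Sum of the bfs scores of all nodes at level `ℓ` over all ordered trees with `n` edges. -/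
noncomputable def totalB (n ℓ : ℕ) : ℕ :=
  ∑ w ∈ dyckWords n, ∑ v ∈ nodesAtLevel n w ℓ, bfsScore n w v

/-- Total number of nodes at level `ℓ` among all ordered trees with `n` edges. -/
noncomputable def levelCount (n ℓ : ℕ) : ℕ :=
  ∑ w ∈ dyckWords n, (nodesAtLevel n w ℓ).card

/-- Number of nonnegative paths with `j` steps from height `h` to height `k`. -/
def pc : ℕ → ℤ → ℤ → ℕ
  | 0, h, k => if h = k ∧ 0 ≤ h then 1 else 0
  | j + 1, h, k => if 0 ≤ h then pc j (h + 1) k + pc j (h - 1) k else 0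

lemma pc_neg_left (j : ℕ) (h k : ℤ) (hh : h < 0) : pc j h k = 0 := by
  cases j with
  | zero => simp only [pc]; rw [if_neg]; omega
  | succ j => simp only [pc]; rw [if_neg]; omega

lemma pc_neg_right (j : ℕ) (h k : ℤ) (hh : k < 0) : pc j h k = 0 := by
  induction j generalizing h with
  | zero => simp only [pc]; rw [if_neg]; omega
  | succ j ih => simp [pc, ih]

lemma pc_succ' (j : ℕ) (h k : ℤ) :
    pc (j + 1) h k = if 0 ≤ k then pc j h (k + 1) + pc j h (k - 1) else 0 := by
  induction j generalizing h with
  | zero =>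
    simp only [pc]
    grind
  | succ j ih =>
    rw [pc, ih, ih]
    by_cases hk : 0 ≤ k
    · by_cases hh : 0 ≤ h
      · simp only [hk, hh, if_true, pc]; omega
      · simp [hk, hh, pc]
    · simp [hk]

lemma pc_symm (j : ℕ) (h k : ℤ) : pc j h k = pc j k h := by
  induction j generalizing h k with
  | zero => simp only [pc]; grind
  | succ j ih => rw [pc_succ', pc, ih h (k + 1), ih h (k - 1)]

open PowerSeries in
lemma cat_pow (h : ℕ) : catalanSeries ^ (h + 1) =
    catalanSeries ^ h + X * catalanSeries ^ (h + 2) := by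
  calc catalanSeries ^ (h + 1) = catalanSeries ^ h * catalanSeries := pow_succ _ _
    _ = catalanSeries ^ h * (catalanSeries ^ 2 * X + 1) := by rw [catalanSeries_sq_mul_X_add_one]
    _ = _ := by ring

open PowerSeries in
lemma pc_coeff (j h : ℕ) :
    (∀ d, j = h + 2 * d → pc j h 0 = coeff d (catalanSeries ^ (h + 1))) ∧
    ((∀ d, j ≠ h + 2 * d) → pc j h 0 = 0) := by
  induction j generalizing h with
  | zero =>
    constructor
    · intro d hd
      obtain rfl : h = 0 := by omega
      obtain rfl : d = 0 := by omega
      simp [pc]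
    · intro hd
      have := hd 0
      simp only [pc]; rw [if_neg]; omega
  | succ j ih =>
    have e1 : ((h : ℤ) + 1) = ((h + 1 : ℕ) : ℤ) := by push_cast; ring
    rw [pc, if_pos (by omega), e1]
    constructor
    · intro d hd
      rw [cat_pow, map_add]
      have A : pc j ((h + 1 : ℕ) : ℤ) 0 = coeff d (X * catalanSeries ^ (h + 2)) := by
        cases d with
        | zero =>
          rw [(ih (h + 1)).2 (by intro d; omega)]; simp
        | succ d =>
          rw [(ih (h + 1)).1 d (by omega), coeff_succ_X_mul]
      have B : pc j ((h : ℤ) - 1) 0 = coeff d (catalanSeries ^ h) := by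
        cases h with
        | zero =>
          rw [pc_neg_left _ _ _ (by simp), pow_zero, coeff_one, if_neg (by omega)]
        | succ h =>
          have e2 : (((h + 1 : ℕ) : ℤ) - 1) = h := by push_cast; ring
          rw [e2, (ih h).1 d (by omega)]
      rw [A, B, add_comm]
    · intro hd
      rw [(ih (h + 1)).2 (by intro d; have := hd (d + 1); omega)]
      cases h with
      | zero => rw [pc_neg_left _ _ _ (by simp)]
      | succ h =>
        have e2 : (((h + 1 : ℕ) : ℤ) - 1) = h := by push_cast; ring
        rw [e2, (ih h).2 (by intro d; have := hd d; omega)]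

lemma ups_add_downs (n : ℕ) (w : Fin n → Bool) (k : ℕ) (hk : k ≤ n) :
    (Finset.univ.filter (fun i : Fin n => (i : ℕ) < k ∧ w i = true)).card +
    (Finset.univ.filter (fun i : Fin n => (i : ℕ) < k ∧ w i = false)).card = k := by
  rw [← Finset.card_union_of_disjoint]
  · have : (Finset.univ.filter (fun i : Fin n => (i : ℕ) < k ∧ w i = true)) ∪
      (Finset.univ.filter (fun i : Fin n => (i : ℕ) < k ∧ w i = false)) =
      Finset.univ.filter (fun i : Fin n => (i : ℕ) < k) := by
      ext i; cases hw : w i <;> simp [hw]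
    rw [this]
    have h2 := Fin.card_filter_val_lt (n := n) (m := k)
    rw [h2]
    omega
  · rw [Finset.disjoint_filter]; intro i _ h1 h2; simp [h1.2] at h2

lemma heightAt_eq_sum (n : ℕ) (w : Fin n → Bool) (k : ℕ) :
    heightAt n w k = ∑ i : Fin n, if (i : ℕ) < k then (if w i = true then (1 : ℤ) else -1) else 0 := by
  unfold heightAt
  rw [Finset.card_filter, Finset.card_filter]
  push_cast
  rw [← Finset.sum_sub_distrib]
  apply Finset.sum_congr rfl
  intro i _
  cases hw : w i <;> by_cases hk : (i : ℕ) < k <;> simp [hk]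

lemma heightAt_zero (n : ℕ) (w : Fin n → Bool) : heightAt n w 0 = 0 := by
  simp [heightAt]

lemma heightAt_cons (n : ℕ) (b : Bool) (w : Fin n → Bool) (k : ℕ) :
    heightAt (n + 1) (Fin.cons b w) (k + 1) = (if b = true then 1 else -1) + heightAt n w k := by
  rw [heightAt_eq_sum, heightAt_eq_sum, Fin.sum_univ_succ]
  simp

/-- Path starting at height `h`, staying nonnegative, ending at `0`. -/
def Good (m : ℕ) (h : ℤ) (w : Fin m → Bool) : Prop :=
  (∀ k : ℕ, k ≤ m → 0 ≤ h + heightAt m w k) ∧ h + heightAt m w m = 0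

lemma good_cons (m : ℕ) (h : ℤ) (b : Bool) (w : Fin m → Bool) :
    Good (m + 1) h (Fin.cons b w) ↔ 0 ≤ h ∧ Good m (h + (if b = true then 1 else -1)) w := by
  unfold Good
  rw [heightAt_cons]
  constructor
  · rintro ⟨h1, h2⟩
    refine ⟨by simpa [heightAt_zero] using h1 0 (by omega), ?_, by omega⟩
    intro k hk
    have := h1 (k + 1) (by omega)
    rw [heightAt_cons] at this
    omega
  · rintro ⟨h0, h1, h2⟩
    refine ⟨?_, by omega⟩
    intro k hk
    cases k with
    | zero => simpa [heightAt_zero] using h0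
    | succ k =>
      rw [heightAt_cons]
      have := h1 k (by omega)
      omega

lemma sum_cons (m : ℕ) (f : (Fin (m + 1) → Bool) → ℕ) :
    ∑ w, f w = ∑ w : Fin m → Bool, f (Fin.cons true w) +
      ∑ w : Fin m → Bool, f (Fin.cons false w) := by
  rw [← (Fin.consEquiv (fun _ : Fin (m + 1) => Bool)).sum_comp, Fintype.sum_prod_type,
    Fintype.sum_bool]
  rfl

lemma goodCount (m : ℕ) (h : ℤ) :
    ∑ w : Fin m → Bool, (if Good m h w then 1 else 0) = pc m h 0 := by
  induction m generalizing h with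
  | zero =>
    simp only [pc, Good, heightAt_eq_sum]
    simp
    grind
  | succ m ih =>
    rw [sum_cons, pc]
    simp only [good_cons]
    by_cases hh : 0 ≤ h
    · simp only [hh, true_and, if_true, ← ih, sub_eq_add_neg]; simp
    · simp [hh]

lemma markedCount (m : ℕ) (i : Fin m) (h ℓ : ℤ) :
    ∑ w : Fin m → Bool, (if Good m h w ∧ w i = true ∧ h + heightAt m w (i + 1) = ℓ then 1 else 0)
      = pc i h (ℓ - 1) * pc (m - 1 - i) ℓ 0 := by
  induction m generalizing h with
  | zero => exact i.elim0
  | succ m ih =>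
    rw [sum_cons]
    simp only [good_cons, heightAt_cons]
    refine Fin.cases ?_ (fun i => ?_) i
    · simp only [Fin.cons_zero, Fin.val_zero, heightAt_zero, pc]
      by_cases hh : 0 ≤ h ∧ h + 1 = ℓ
      · obtain ⟨h0, rfl⟩ := hh
        simp [h0, ← goodCount]
      · have : ¬ (h = ℓ - 1 ∧ 0 ≤ h) := by omega
        rw [if_neg this, zero_mul]
        simp only [Bool.false_eq_true, false_and, and_false, if_false, Finset.sum_const_zero, add_zero]
        apply Finset.sum_eq_zero
        intro w _
        rw [if_neg]
        rintro ⟨⟨a, _⟩, _, b⟩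
        simp at b
        exact hh ⟨a, b⟩
    · simp only [Fin.cons_succ, Fin.val_succ, pc]
      have e : m + 1 - 1 - ((i : ℕ) + 1) = m - 1 - i := by omega
      rw [e]
      by_cases hh : 0 ≤ h
      · simp only [hh, true_and, if_true, add_mul]
        rw [← ih i (h + 1), ← ih i (h - 1)]
        simp only [sub_eq_add_neg, add_assoc]
        simp
      · simp [hh]

lemma isDyck_iff (n : ℕ) (w : Fin (2 * n) → Bool) : IsDyck n w ↔ Good (2 * n) 0 w := by
  unfold IsDyck Good
  simp only [zero_add]
  rw [and_comm]
  apply and_congr_right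
  intro _
  have h1 := ups_add_downs (2 * n) w (2 * n) le_rfl
  unfold heightAt
  have e : (Finset.univ.filter (fun i : Fin (2 * n) => w i = true)) =
    (Finset.univ.filter (fun i : Fin (2 * n) => (i : ℕ) < 2 * n ∧ w i = true)) := by
    ext i; simp
  rw [e]
  omega

lemma two_dfs (n : ℕ) (w : Fin (2 * n) → Bool) (i : Fin (2 * n)) (ℓ : ℕ) (hw : w i = true)
    (hh : heightAt (2 * n) w (i + 1) = ℓ) : 2 * dfsScore n w (some i) = i + 1 + ℓ := by
  have h1 := ups_add_downs (2 * n) w (i + 1) (by omega)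
  have e : (Finset.univ.filter (fun j : Fin (2 * n) => (j : ℕ) < (i : ℕ) + 1 ∧ w j = true)) =
    insert i (Finset.univ.filter (fun j : Fin (2 * n) => (j : ℕ) < (i : ℕ) ∧ w j = true)) := by
    ext j
    simp only [Finset.mem_filter, Finset.mem_univ, true_and, Finset.mem_insert, Fin.ext_iff]
    constructor
    · rintro ⟨a, b⟩
      by_cases h : (j : ℕ) = i
      · exact Or.inl h
      · exact Or.inr ⟨by omega, b⟩
    · rintro (a | ⟨a, b⟩)
      · have : j = i := Fin.ext a
        subst this
        exact ⟨by omega, hw⟩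
      · exact ⟨by omega, b⟩
  have e2 := congrArg Finset.card e
  rw [Finset.card_insert_of_notMem (by simp)] at e2
  unfold heightAt at hh
  simp only [dfsScore]
  omega

lemma sum_nodes (n ℓ : ℕ) (w : Fin (2 * n) → Bool) (f : Option (Fin (2 * n)) → ℕ) :
    ∑ v ∈ nodesAtLevel n w ℓ, f v = (if ℓ = 0 then f none else 0) +
      ∑ i : Fin (2 * n), if w i = true ∧ heightAt (2 * n) w (i + 1) = ℓ then f (some i) else 0 := by
  unfold nodesAtLevel
  rw [Finset.sum_filter, Fintype.sum_option]
  congr 1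
  · simp only [isNode, nodeLevel, true_and]
    by_cases h : ℓ = 0
    · subst h; simp
    · rw [if_neg h, if_neg]; omega
  · apply Finset.sum_congr rfl
    intro i _
    simp only [isNode, nodeLevel]
    congr 1

lemma sum_all (n ℓ : ℕ) (g : Fin (2 * n) → ℕ) :
    ∑ w ∈ dyckWords n, ∑ i : Fin (2 * n),
      (if w i = true ∧ heightAt (2 * n) w (i + 1) = ℓ then g i else 0) =
    ∑ i : Fin (2 * n), g i * (pc i 0 ((ℓ : ℤ) - 1) * pc (2 * n - 1 - i) ℓ 0) := by
  unfold dyckWords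
  rw [Finset.sum_comm]
  apply Finset.sum_congr rfl
  intro i _
  rw [← markedCount, Finset.sum_filter, Finset.mul_sum]
  apply Finset.sum_congr rfl
  intro w _
  simp only [isDyck_iff, zero_add]
  by_cases h1 : Good (2 * n) 0 w <;>
    by_cases h2 : w i = true ∧ heightAt (2 * n) w (i + 1) = ℓ <;> simp [h1, h2]

lemma two_totalD (n ℓ : ℕ) : 2 * totalD n ℓ =
    ∑ i : Fin (2 * n), (i + 1 + ℓ) * (pc i 0 ((ℓ : ℤ) - 1) * pc (2 * n - 1 - i) ℓ 0) := by
  rw [← sum_all, totalD, Finset.mul_sum]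
  apply Finset.sum_congr rfl
  intro w _
  rw [sum_nodes]
  have h0 : dfsScore n w none = 0 := rfl
  simp only [h0, ite_self, zero_add, Finset.mul_sum]
  apply Finset.sum_congr rfl
  intro i _
  split_ifs with h
  · rw [two_dfs n w i ℓ h.1 h.2]
  · rfl

lemma levelCount_eq (n ℓ : ℕ) (hℓ : ℓ ≠ 0) : levelCount n ℓ =
    ∑ i : Fin (2 * n), 1 * (pc i 0 ((ℓ : ℤ) - 1) * pc (2 * n - 1 - i) ℓ 0) := by
  rw [← sum_all, levelCount]
  apply Finset.sum_congr rfl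
  intro w _
  rw [Finset.card_eq_sum_ones, sum_nodes, if_neg hℓ, zero_add]

open PowerSeries in
lemma conv_eq (n k : ℕ) (hk : k + 1 ≤ n) (g : ℕ → ℕ) :
    ∑ i : Fin (2 * n), g i * (pc i 0 (((k + 1 : ℕ) : ℤ) - 1) * pc (2 * n - 1 - i) ((k + 1 : ℕ) : ℤ) 0) =
    ∑ p ∈ Finset.HasAntidiagonal.antidiagonal (n - (k + 1)), g (k + 2 * p.1) *
      (coeff p.1 (catalanSeries ^ (k + 1)) * coeff p.2 (catalanSeries ^ (k + 2))) := by
  have e2 : (((k + 1 : ℕ) : ℤ) - 1) = k := by push_cast; ring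
  rw [e2, Fin.sum_univ_eq_sum_range
    (fun i => g i * (pc i 0 (k : ℤ) * pc (2 * n - 1 - i) ((k + 1 : ℕ) : ℤ) 0))]
  symm
  apply Finset.sum_bij_ne_zero (fun p _ _ => k + 2 * p.1)
  · intro p hp _
    rw [Finset.HasAntidiagonal.mem_antidiagonal] at hp
    rw [Finset.mem_range]; omega
  · intro p hp _ q hq _ h
    rw [Finset.HasAntidiagonal.mem_antidiagonal] at hp hq
    ext <;> omega
  · intro i hi hne
    rw [Finset.mem_range] at hi
    rw [pc_symm i] at hne
    have h1 : ∃ d, i = k + 2 * d := by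
      by_contra hc
      push Not at hc
      rw [(pc_coeff i k).2 hc] at hne
      simp at hne
    have h2 : ∃ d, 2 * n - 1 - i = (k + 1) + 2 * d := by
      by_contra hc
      push Not at hc
      rw [(pc_coeff (2 * n - 1 - i) (k + 1)).2 hc] at hne
      simp at hne
    obtain ⟨d, hd⟩ := h1
    obtain ⟨e, he⟩ := h2
    refine ⟨(d, e), by rw [Finset.HasAntidiagonal.mem_antidiagonal]; omega, ?_, hd.symm⟩
    rw [(pc_coeff i k).1 d hd, (pc_coeff _ (k + 1)).1 e he, hd] at hne
    exact hne
  · intro p hp _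
    rw [Finset.HasAntidiagonal.mem_antidiagonal] at hp
    rw [pc_symm, (pc_coeff _ k).1 p.1 rfl, (pc_coeff _ (k + 1)).1 p.2 (by omega)]

open PowerSeries in
lemma coeff_X_deriv (f : PowerSeries ℕ) (m : ℕ) :
    coeff m (X * derivative ℕ f) = m * coeff m f := by
  cases m with
  | zero => simp
  | succ m => rw [coeff_succ_X_mul, coeff_derivative]; push_cast; ring

open PowerSeries in
lemma weighted (m k : ℕ) :
    (2 * k + 3) * ∑ p ∈ Finset.HasAntidiagonal.antidiagonal m, p.1 *
      (coeff p.1 (catalanSeries ^ (k + 1)) * coeff p.2 (catalanSeries ^ (k + 2))) =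
    (k + 1) * (m * coeff m (catalanSeries ^ (2 * k + 3))) := by
  have h1 : ∑ p ∈ Finset.HasAntidiagonal.antidiagonal m, p.1 *
      (coeff p.1 (catalanSeries ^ (k + 1)) * coeff p.2 (catalanSeries ^ (k + 2))) =
      coeff m ((X * derivative ℕ (catalanSeries ^ (k + 1))) * catalanSeries ^ (k + 2)) := by
    rw [coeff_mul]
    simp only [coeff_X_deriv, mul_assoc]
  rw [h1, ← coeff_X_deriv, ← smul_eq_mul (2 * k + 3), ← smul_eq_mul (k + 1), ← map_nsmul, ← map_nsmul]
  congr 1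
  rw [derivative_pow, derivative_pow, nsmul_eq_mul, nsmul_eq_mul]
  simp only [Nat.add_sub_cancel, show 2 * k + 3 - 1 = 2 * k + 2 from rfl]
  push_cast
  ring

open PowerSeries in
lemma coeff_pos (m k : ℕ) : 0 < coeff m (catalanSeries ^ (k + 1)) := by
  have hc : 0 < catalan m := by
    have h1 := succ_mul_catalan_eq_centralBinom m
    have h2 := Nat.centralBinom_pos m
    rw [← h1] at h2
    exact Nat.pos_of_mul_pos_left h2
  rw [pow_succ, coeff_mul]
  have hs := Finset.single_le_sum (s := Finset.HasAntidiagonal.antidiagonal m)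
    (f := fun p : ℕ × ℕ => coeff p.1 (catalanSeries ^ k) * coeff p.2 catalanSeries)
    (fun _ _ => Nat.zero_le _) (a := (0, m)) (by simp)
  simp at hs
  simp
  omega

/-- The expected dfsScore of a uniformly random node at level ℓ among all ordered trees
with n edges equals (ℓ/(2ℓ+1))·(n+ℓ+1). -/
theorem expected_dfsScore (n ℓ : ℕ) (h : ℓ ≤ n) :
    (totalD n ℓ : ℚ) / (levelCount n ℓ : ℚ) =
      ((ℓ : ℚ) / (2 * ℓ + 1)) * (n + ℓ + 1) := by
  rcases Nat.eq_zero_or_pos ℓ with rfl | hpos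
  · have h2 := two_totalD n 0
    rw [Finset.sum_eq_zero] at h2
    · have : totalD n 0 = 0 := by omega
      simp [this]
    · intro i _
      rw [pc_neg_right _ _ _ (by simp)]
      simp
  · obtain ⟨k, rfl⟩ : ∃ k, ℓ = k + 1 := ⟨ℓ - 1, by omega⟩
    obtain ⟨m, rfl⟩ : ∃ m, n = m + (k + 1) := ⟨n - (k + 1), by omega⟩
    have hL := levelCount_eq (m + (k + 1)) (k + 1) (by omega)
    rw [conv_eq _ _ h (fun _ => 1)] at hL
    simp only [one_mul, Nat.add_sub_cancel] at hL
    rw [← PowerSeries.coeff_mul, ← pow_add] at hL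
    have hD := two_totalD (m + (k + 1)) (k + 1)
    rw [conv_eq _ _ h (fun i => i + 1 + (k + 1))] at hD
    simp only [Nat.add_sub_cancel] at hD
    have hw := weighted m k
    have e : k + 1 + (k + 2) = 2 * k + 3 := by ring
    rw [e] at hL
    rw [← hL] at hw
    have hp : 0 < levelCount (m + (k + 1)) (k + 1) := by
      rw [hL]; exact coeff_pos m (2 * k + 2)
    set S := ∑ p ∈ Finset.HasAntidiagonal.antidiagonal m, p.1 *
      (PowerSeries.coeff p.1 (PowerSeries.catalanSeries ^ (k + 1)) *
        PowerSeries.coeff p.2 (PowerSeries.catalanSeries ^ (k + 2))) with hS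
    have hD2 : totalD (m + (k + 1)) (k + 1) = S + (k + 1) * levelCount (m + (k + 1)) (k + 1) := by
      rw [← e, pow_add, PowerSeries.coeff_mul] at hL
      rw [hL, hS, Finset.mul_sum, ← Finset.sum_add_distrib]
      apply Nat.eq_of_mul_eq_mul_left (show 0 < 2 by norm_num)
      rw [hD, Finset.mul_sum]
      apply Finset.sum_congr rfl
      intro p _
      ring
    generalize levelCount (m + (k + 1)) (k + 1) = L at *
    rw [hD2]
    have hLq : (L : ℚ) ≠ 0 := by positivity
    have hwq : (2 * (k : ℚ) + 3) * S = (k + 1) * (m * L) := by exact_mod_cast hw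
    have h3 : (2 * ((k : ℚ) + 1) + 1) ≠ 0 := by positivity
    push_cast
    field_simp
    linear_combination hwq
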